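/- For every square-free word w over {0,1,2} and every word v that is an image of w under the substitution h, the word v is square-free. -/

import Mathlib

/-- A word is *square-free* if it contains no factor of the form `u ++ u`
with `u` nonempty. -/
def SqFree {α : Type*} (w : List α) : Prop :=
  ∀ u : List α, u ≠ [] → ¬ (u ++ u) <:+: w

/-- The word `p̂ = 1202120121021201021`. -/
def phat : List (Fin 3) := [1,2,0,2,1,2,0,1,2,1,0,2,1,2,0,1,0,2,1]

/-- The palindrome `p = mirror(p̂) ++ 0 ++ p̂`. -/
def pal : List (Fin 3) := phat.reverse ++ 0 :: phat

/-- The number of occurrences of a (nonempty) word `u` as a factor of `v`. -/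
def occCount (u v : List (Fin 3)) : ℕ :=
  (List.range v.length).countP (fun i => (v.drop i).take u.length == u)

/-- A word `v` is *nice* if `p v p` is square-free and contains exactly two
occurrences of `p̂` and exactly two occurrences of its mirror image. -/
def IsNice (v : List (Fin 3)) : Prop :=
  SqFree (pal ++ v ++ pal) ∧ occCount phat (pal ++ v ++ pal) = 2 ∧
    occCount phat.reverse (pal ++ v ++ pal) = 2

/-- `lword n` is the lexicographically least nice word of length `n`
(the empty word if no nice word of length `n` exists). -/
noncomputable def lword (n : ℕ) : List (Fin 3) := by
  classical
  exact if h : {w : List (Fin 3) | IsNice w ∧ w.length = n}.Nonempty then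
    Set.IsWF.min
      (Set.Finite.isWF
        ((List.finite_length_eq (Fin 3) n).subset (fun _ hw => hw.2))) h
  else []

/-- A set of words is *mirror-free* if it does not contain both a word and its
(distinct) mirror image. -/
def MirrorFree (S : Set (List (Fin 3))) : Prop :=
  ∀ w ∈ S, w ≠ w.reverse → w.reverse ∉ S

/-- `S` is an `n`-good set: a mirror-free set of nice words of length `n` such that
for all `i ∈ {2n+100, …, 7n}` and all distinct `u v ∈ S`, the words
`p u p v p lᵢ`, `p ū p v p lᵢ`, `p u p v̄ p l̄ᵢ` and `p ū p v̄ p l̄ᵢ` are square-free. -/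
def GoodSet (n : ℕ) (S : Set (List (Fin 3))) : Prop :=
  (∀ w ∈ S, IsNice w ∧ w.length = n) ∧ MirrorFree S ∧
    ∀ i : ℕ, 2 * n + 100 ≤ i → i ≤ 7 * n → ∀ u ∈ S, ∀ v ∈ S, u ≠ v →
      SqFree (pal ++ u ++ pal ++ v ++ pal ++ lword i) ∧
      SqFree (pal ++ u.reverse ++ pal ++ v ++ pal ++ lword i) ∧
      SqFree (pal ++ u ++ pal ++ v.reverse ++ pal ++ (lword i).reverse) ∧
      SqFree (pal ++ u.reverse ++ pal ++ v.reverse ++ pal ++ (lword i).reverse)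

/-- `mirrorIf r w` is the mirror image of `w` if `r = true`, and `w` itself otherwise. -/
def mirrorIf (r : Bool) (w : List (Fin 3)) : List (Fin 3) :=
  if r then w.reverse else w

/-- The nondeterministic substitution `h`. -/
def himg : Fin 3 → Set (List (Fin 3)) :=
  ![{[0,1,2,1,0,2,1,2,0,2,1,0,2,0,1,0,2,1,2,0,1,2,1,0],
     [0,1,2,1,0,2,1,2,0,2,1,0,2,0,1,2,0,2,1,2,0,1,2,1,0]},
    {[1,2,0,2,1,0,2,0,1,0,2,1,0,1,2,1,0,2,0,1,2,0,2,1],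
     [1,2,0,2,1,0,2,0,1,0,2,1,0,1,2,0,1,0,2,0,1,2,0,2,1]},
    {[2,0,1,0,2,1,0,1,2,1,0,2,1,2,0,2,1,0,1,2,0,1,0,2],
     [2,0,1,0,2,1,0,1,2,1,0,2,1,2,0,1,2,1,0,1,2,0,1,0,2]}]

/-- `v` is an image of `w` under the substitution `h`: `v` is obtained by replacing
each letter `c` of `w` by some word of `himg c`. -/
def IsImage (w v : List (Fin 3)) : Prop :=
  ∃ vs : List (List (Fin 3)), List.Forall₂ (fun c u => u ∈ himg c) w vs ∧ v = vs.flatten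

namespace ImgSq

def hb : Fin 3 × Bool → List ℕ
  | (0, false) => [0,1,2,1,0,2,1,2,0,2,1,0,2,0,1,0,2,1,2,0,1,2,1,0]
  | (0, true) => [0,1,2,1,0,2,1,2,0,2,1,0,2,0,1,2,0,2,1,2,0,1,2,1,0]
  | (1, false) => [1,2,0,2,1,0,2,0,1,0,2,1,0,1,2,1,0,2,0,1,2,0,2,1]
  | (1, true) => [1,2,0,2,1,0,2,0,1,0,2,1,0,1,2,0,1,0,2,0,1,2,0,2,1]
  | (2, false) => [2,0,1,0,2,1,0,1,2,1,0,2,1,2,0,2,1,0,1,2,0,1,0,2]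
  | (2, true) => [2,0,1,0,2,1,0,1,2,1,0,2,1,2,0,1,2,1,0,1,2,0,1,0,2]

def F (l : List (Fin 3 × Bool)) : List ℕ := l.flatMap hb

def agree : ℕ → List ℕ → List ℕ → Bool
  | 0, _, _ => true
  | n+1, a :: l, b :: m => Nat.beq a b && agree n l m
  | _+1, _, _ => false

def chkP : ℕ → ℕ → List ℕ → List ℕ → Bool
  | 0, _, _, _ => true
  | n+1, p, l, m => !agree p l m && chkP n (p+1) l m.tail

def chkS : ℕ → List ℕ → Bool
  | 0, _ => true
  | n+1, l => chkP 18 1 l l.tail && chkS n l.tail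

def letters : List (Fin 3 × Bool) :=
  [(0,false),(0,true),(1,false),(1,true),(2,false),(2,true)]

def good : List (Fin 3 × Bool) → Bool
  | a :: b :: l => !(Nat.beq a.1.val b.1.val) && good (b :: l)
  | _ => true

def words : ℕ → List (List (Fin 3 × Bool))
  | 0 => [[]]
  | n+1 => [] :: (letters.flatMap fun a =>
      ((words n).map (fun l => a :: l)).filter good)

def chkM : ℕ → List ℕ → Bool
  | 0, _ => true
  | n+1, l => letters.all (fun c => !agree 13 l (hb c)) && chkM n l.tail

def chkM' : List (Fin 3 × Bool) → Bool
  | [] => true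
  | a :: l => chkM ((hb a).length - 1) (F (a :: l)).tail

def chkW (l : List ℕ) : Bool :=
  chkP 18 7 (l.drop 12) (l.drop 31) && chkP 18 8 (l.drop 24) (l.drop 43)

theorem small_check : ((words 3).all fun l => chkS 25 (F l)) = true := by
  decide +kernel

theorem mid_check : ((words 4).all fun l => chkW (F l)) = true := by
  decide +kernel

theorem mark_check : ((words 2).all chkM') = true := by
  decide +kernel

theorem agree_of (n : ℕ) : ∀ (l m : List ℕ), n ≤ l.length → n ≤ m.length →
    (∀ k < n, l.getD k 0 = m.getD k 0) → agree n l m = true := by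
  induction n with
  | zero => intro l m _ _ _; simp [agree]
  | succ n ih =>
    intro l m hl hm h
    cases l with
    | nil => simp at hl
    | cons a l =>
      cases m with
      | nil => simp at hm
      | cons b m =>
        have h0 := h 0 (by omega)
        simp only [agree, Bool.and_eq_true]
        refine ⟨by simpa using h0, ih l m (by simpa using hl) (by simpa using hm) ?_⟩
        intro k hk
        simpa using h (k+1) (by omega)

theorem chkP_spec (n : ℕ) : ∀ p l m, chkP n p l m = true → ∀ k < n,
    agree (p+k) l (m.drop k) = false := by
  induction n with
  | zero => intro p l m _ k hk; omega
  | succ n ih =>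
    intro p l m h k hk
    simp only [chkP, Bool.and_eq_true, Bool.not_eq_true'] at h
    cases k with
    | zero => simpa using h.1
    | succ k =>
      have := ih _ _ _ h.2 k (by omega)
      rw [List.drop_tail] at this
      rw [← this]; congr 1; omega

theorem chkS_spec (n : ℕ) : ∀ l, chkS n l = true → ∀ s < n, ∀ p, 1 ≤ p → p ≤ 18 →
    agree p (l.drop s) (l.drop (s+p)) = false := by
  induction n with
  | zero => intro l _ s hs; omega
  | succ n ih =>
    intro l h s hs p hp hp'
    simp only [chkS, Bool.and_eq_true] at h
    cases s with
    | zero =>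
      have := chkP_spec _ _ _ _ h.1 (p-1) (by omega)
      rw [List.drop_tail] at this
      rw [← this]; simp only [List.drop_zero]; congr 1 <;> first | omega | (congr 1; omega)
    | succ s =>
      have := ih _ h.2 s (by omega) p hp hp'
      rw [List.drop_tail, List.drop_tail] at this
      rw [← this]; congr 2; omega

theorem mem_letters (a : Fin 3 × Bool) : a ∈ letters := by
  revert a; decide

theorem chkM_spec (n : ℕ) : ∀ l, chkM n l = true → ∀ s < n, ∀ c,
    agree 13 (l.drop s) (hb c) = false := by
  induction n with
  | zero => intro l _ s hs; omega
  | succ n ih =>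
    intro l h s hs c
    simp only [chkM, Bool.and_eq_true, List.all_eq_true, Bool.not_eq_true'] at h
    cases s with
    | zero => simpa using h.1 c (mem_letters c)
    | succ s =>
      have := ih _ h.2 s (by omega) c
      rwa [List.drop_tail] at this

theorem good_tail (a) (l) (h : good (a :: l) = true) : good l = true := by
  cases l with
  | nil => simp [good]
  | cons b l => simp only [good, Bool.and_eq_true] at h; exact h.2

theorem mem_words (n : ℕ) : ∀ l, l.length ≤ n → good l = true → l ∈ words n := by
  induction n with
  | zero => intro l hl _; have := List.length_eq_zero_iff.1 (Nat.le_zero.1 hl); simp [words, this]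
  | succ n ih =>
    intro l hl hg
    cases l with
    | nil => simp [words]
    | cons a l =>
      simp only [words, List.mem_cons, List.mem_flatMap, List.mem_filter, List.mem_map]
      right
      exact ⟨a, mem_letters a, ⟨l, ih l (by simpa using hl) (good_tail a l hg), rfl⟩, hg⟩

theorem good_of (cs : List (Fin 3 × Bool)) (h : SqFree (cs.map Prod.fst)) : good cs = true := by
  induction cs with
  | nil => simp [good]
  | cons a l ih =>
    have ih' := ih (fun u hu hh => h u hu (hh.trans ⟨[a.1], [], by simp⟩))
    cases l with
    | nil => simp [good]
    | cons b l =>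
      simp only [good, Bool.and_eq_true, Bool.not_eq_true']
      refine ⟨?_, ih'⟩
      by_contra hc
      have hc : a.1 = b.1 := by
        apply Fin.ext
        simpa using hc
      exact h [a.1] (by simp) ⟨[], l.map Prod.fst, by simp [hc]⟩

theorem sqfree_infix {α : Type*} {l m : List α} (h : SqFree m) (hl : l <:+: m) : SqFree l :=
  fun u hu hh => h u hu (hh.trans hl)

theorem core (n : ℕ) (B f w : ℕ → ℕ) (hB0 : B 0 = 0)
    (hB : ∀ j < n, B j + 24 ≤ B (j+1) ∧ B (j+1) ≤ B j + 25)
    (hfirst : ∀ j < n, f (B j) = w j) (hlast : ∀ j < n, f (B (j+1) - 1) = w j)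
    (hmark : ∀ i j, j < n → i + 13 ≤ B n → (∀ k < 13, f (i+k) = f (B j + k)) →
      ∃ j' < n, i = B j')
    (s p : ℕ) (hp : 37 ≤ p) (hs : s + 2*p ≤ B n)
    (hsq : ∀ i, s ≤ i → i < s+p → f i = f (i+p)) :
    ∃ a d, 0 < d ∧ a + 2*d ≤ n ∧ ∀ i, a ≤ i → i < a+d → w i = w (i+d) := by
  have mono : ∀ k j, j + k ≤ n → B j + 24*k ≤ B (j+k) := by
    intro k
    induction k with
    | zero => intro j _; simp
    | succ k ih =>
      intro j hj
      have h1 := ih j (by omega)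
      have h2 := (hB (j+k) (by omega)).1
      rw [← add_assoc]; omega
  have mono' : ∀ i j, i ≤ j → j ≤ n → B i + 24*(j-i) ≤ B j := by
    intro i j h1 h2
    have := mono (j-i) i (by omega)
    rwa [show i + (j-i) = j by omega] at this
  have lt_of : ∀ i j, i ≤ n → j ≤ n → B i < B j → i < j := by
    intro i j h1 h2 h3
    by_contra hc
    have := mono' j i (by omega) h1
    omega
  -- first boundary at or after s
  have hex : ∃ a, s ≤ B a := ⟨n, by omega⟩
  obtain ⟨a, ha, hamin⟩ : ∃ a, s ≤ B a ∧ ∀ j < a, B j < s :=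
    ⟨Nat.find hex, Nat.find_spec hex, fun j hj => by simpa using Nat.find_min hex hj⟩
  have han : a ≤ n := by
    by_contra hc
    have := hamin n (by omega)
    omega
  have ha24 : B a ≤ s + 24 := by
    rcases Nat.eq_zero_or_pos a with h | h
    · subst h; omega
    · have h1 := hamin (a-1) (by omega)
      have h2 := (hB (a-1) (by omega)).2
      rw [show a - 1 + 1 = a by omega] at h2
      omega
  have han' : a < n := lt_of a n han le_rfl (by omega)
  have sync : ∀ j < n, s ≤ B j → B j + 13 ≤ s + p → ∃ j' < n, B j + p = B j' := by
    intro j hj h1 h2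
    apply hmark (B j + p) j hj (by omega)
    intro k hk
    have := hsq (B j + k) (by omega) (by omega)
    rw [this]; congr 1; omega
  obtain ⟨a', ha'n, ha'⟩ := sync a han' ha (by omega)
  have step : ∀ j, a + j < n → B (a+j) + 13 ≤ s+p → a' + j < n ∧ B (a'+j) = B (a+j) + p := by
    intro j
    induction j with
    | zero => intro _ _; exact ⟨ha'n, ha'.symm⟩
    | succ j ih =>
      intro h1 h2
      have hb1 := hB (a+j) (by omega)
      rw [← add_assoc] at h1 h2
      obtain ⟨h3, h4⟩ := ih (by omega) (by omega)
      have h5 := mono' a (a+j+1) (by omega) (by omega)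
      obtain ⟨k, hk, hk'⟩ := sync (a+j+1) h1 (by omega) h2
      have h6 : a' + j < k := lt_of _ _ (by omega) (by omega) (by omega)
      have h7 := mono' (a'+j) k (by omega) (by omega)
      have h8 : k = a' + j + 1 := by omega
      rw [← add_assoc, ← add_assoc, ← h8]
      exact ⟨hk, hk'.symm⟩
  -- last boundary with full marker in the first u
  have hex2 : ∃ c, s + p < B c + 13 := ⟨n, by omega⟩
  obtain ⟨c, hc, hcmin⟩ : ∃ c, s + p < B c + 13 ∧ ∀ j < c, B j + 13 ≤ s + p :=
    ⟨Nat.find hex2, Nat.find_spec hex2, fun j hj => by simpa using Nat.find_min hex2 hj⟩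
  have hcn : c ≤ n := by
    by_contra hcc
    have := hcmin n (by omega)
    omega
  have hac : a < c := by
    apply lt_of _ _ han hcn
    omega
  have hc1 := hcmin (c-1) (by omega)
  have hca : c ≤ a' := by
    have := lt_of (c-1) a' (by omega) (by omega) (by omega)
    omega
  have hca2 : a' ≤ c + 1 := by
    by_contra hcc
    have := mono' c a' (by omega) (by omega)
    omega
  have hend := step (c-1-a) (by omega) (by rwa [show a + (c-1-a) = c-1 by omega])
  have heq : ∀ i, a ≤ i → i < c → w i = w (i + (a'-a)) := by
    intro i h1 h2
    have h3 := hcmin i h2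
    have h4 := step (i-a) (by omega) (by rwa [show a + (i-a) = i by omega])
    rw [show a + (i-a) = i by omega, show a' + (i-a) = i + (a'-a) by omega] at h4
    have h5 := mono' a i h1 (by omega)
    rw [← hfirst i (by omega), ← hfirst _ h4.1, h4.2]
    exact hsq _ (by omega) (by omega)
  rcases Nat.lt_or_ge c a' with h | h
  · -- a' = c + 1
    have e : a' = c + 1 := by omega
    have hBc := hB c (by omega)
    rw [← e] at hBc
    have hsa : s < B a := by
      by_contra hcc
      omega
    have ha0 : 0 < a := by
      rcases Nat.eq_zero_or_pos a with h | h
      · subst h; omega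
      · exact h
    refine ⟨a-1, a'-a, by omega, by omega, ?_⟩
    intro i h1 h2
    rcases Nat.lt_or_ge i a with h3 | h3
    · have e2 : i = a - 1 := by omega
      have e3 := hlast (a-1) (by omega)
      rw [show a - 1 + 1 = a by omega] at e3
      have e4 := hlast c (by omega)
      rw [← e] at e4
      rw [e2, show a - 1 + (a'-a) = c by omega, ← e3, ← e4]
      have := hsq (B a - 1) (by omega) (by omega)
      rw [this]; congr 1; omega
    · exact heq i h3 (by omega)
  · exact ⟨a, a'-a, by omega, by omega, fun i h1 h2 => heq i h1 (by omega)⟩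

theorem hb_len (c) : 24 ≤ (hb c).length ∧ (hb c).length ≤ 25 := by
  revert c; decide
theorem hb_first (c) : (hb c).getD 0 0 = c.1.val := by
  revert c; decide
theorem hb_last (c) : (hb c).getD ((hb c).length - 1) 0 = c.1.val := by
  revert c; decide

theorem F_append (l m) : F (l ++ m) = F l ++ F m := by simp [F]

theorem window (cs : List (Fin 3 × Bool)) (a m : ℕ) :
    (F (cs.take a)).length + (F ((cs.drop a).take m)).length = (F (cs.take (a+m))).length ∧
    ∀ x < (F ((cs.drop a).take m)).length,
      (F cs).getD ((F (cs.take a)).length + x) 0 = (F ((cs.drop a).take m)).getD x 0 := by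
  constructor
  · rw [List.take_add, F_append, List.length_append]
  · intro x hx
    have : F cs = F (cs.take a) ++ (F ((cs.drop a).take m) ++ F ((cs.drop a).drop m)) := by
      rw [← F_append, ← F_append, List.take_append_drop, List.take_append_drop]
    rw [this, List.getD_append_right _ _ _ _ (by omega), Nat.add_sub_cancel_left,
      List.getD_append _ _ _ _ hx]

theorem main (cs : List (Fin 3 × Bool)) (hw : SqFree (cs.map Prod.fst)) (s p : ℕ) (hp : 0 < p)
    (hs : s + 2*p ≤ (F cs).length)
    (hsq : ∀ i, s ≤ i → i < s+p → (F cs).getD i 0 = (F cs).getD (i+p) 0) : False := by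
  set n := cs.length with hn
  set f : ℕ → ℕ := fun i => (F cs).getD i 0 with hf
  set B : ℕ → ℕ := fun a => (F (cs.take a)).length with hBdef
  have hBn : B n = (F cs).length := by simp [hBdef, hn]
  have hBge : ∀ j, n ≤ j → B j = B n := by
    intro j hj
    simp only [hBdef]
    rw [List.take_of_length_le hj, List.take_of_length_le hn.ge]
  have hB0 : B 0 = 0 := by simp [hBdef, F]
  have hone : ∀ j (hj : j < n), F ((cs.drop j).take 1) = hb cs[j] := by
    intro j hj
    rw [List.drop_eq_getElem_cons hj]
    simp only [List.take_succ_cons, List.take_zero, F, List.flatMap_cons, List.flatMap_nil,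
      List.append_nil]
  have hBs : ∀ j (hj : j < n), B (j+1) = B j + (hb cs[j]).length := by
    intro j hj
    have := (window cs j 1).1
    rw [hone j hj] at this
    exact this.symm
  have hfb : ∀ j (hj : j < n), ∀ x < (hb cs[j]).length, f (B j + x) = (hb cs[j]).getD x 0 := by
    intro j hj x hx
    have := (window cs j 1).2 x
    rw [hone j hj] at this
    exact this hx
  have hB : ∀ j < n, B j + 24 ≤ B (j+1) ∧ B (j+1) ≤ B j + 25 := by
    intro j hj
    have := hb_len cs[j]
    rw [hBs j hj]; omega
  have hgood : ∀ a m, good ((cs.drop a).take m) = true := by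
    intro a m
    apply good_of
    apply sqfree_infix hw
    apply List.IsInfix.map
    exact (List.take_prefix _ _).isInfix.trans (List.drop_suffix _ _).isInfix
  have hloc : ∀ i < B n, ∃ a < n, B a ≤ i ∧ i < B (a+1) := by
    intro i hi
    have hex : ∃ a, i < B a := ⟨n, hi⟩
    have h1 := Nat.find_spec hex
    have h2 : Nat.find hex ≠ 0 := by
      intro h; rw [h, hB0] at h1; omega
    have h3 : B (Nat.find hex - 1) ≤ i := by
      simpa using Nat.find_min hex (m := Nat.find hex - 1) (by omega)
    have h4 : Nat.find hex ≤ n := Nat.find_min' hex hi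
    refine ⟨Nat.find hex - 1, by omega, h3, ?_⟩
    rwa [show Nat.find hex - 1 + 1 = Nat.find hex by omega]
  rcases Nat.lt_or_ge p 37 with h37 | h37
  · -- short squares
    obtain ⟨a, han, ha1, ha2⟩ := hloc s (by omega)
    have hBa := hB a han
    have key : ∀ m, 1 ≤ m → 2*p ≤ 24*(m-1) → ∀ q g, s - B a ≤ q → q + g ≤ s - B a + p →
        agree g ((F ((cs.drop a).take m)).drop q) ((F ((cs.drop a).take m)).drop (q+p)) = true := by
      intro m hm1 hm q g hq hg
      obtain ⟨hL, hLf⟩ := window cs a m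
      set L := F ((cs.drop a).take m) with hLdef
      change B a + L.length = B (a+m) at hL
      have hLf' : ∀ x < L.length, f (B a + x) = L.getD x 0 := hLf
      have hlen : s + 2*p ≤ B a + L.length := by
        rw [hL]
        rcases Nat.lt_or_ge n (a+m) with h | h
        · rw [hBge _ h.le]; omega
        · have mono : ∀ k, a + 1 + k ≤ n → B (a+1) + 24*k ≤ B (a+1+k) := by
            intro k
            induction k with
            | zero => intro _; simp
            | succ k ih =>
              intro hk
              have h1 := ih (by omega)
              have h2 := (hB (a+1+k) (by omega)).1
              rw [← add_assoc]; omega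
          have h1 := mono (m-1) (by omega)
          rw [show a + 1 + (m-1) = a + m by omega] at h1
          omega
      apply agree_of
      · rw [List.length_drop]; omega
      · rw [List.length_drop]; omega
      · intro k hk
        rw [List.getD_eq_getElem?_getD, List.getD_eq_getElem?_getD, List.getElem?_drop,
          List.getElem?_drop, ← List.getD_eq_getElem?_getD, ← List.getD_eq_getElem?_getD,
          ← hLf' _ (by omega), ← hLf' _ (by omega)]
        have := hsq (B a + (q + k)) (by omega) (by omega)
        rw [show B a + (q + p + k) = B a + (q + k) + p by omega]
        exact this
    rcases Nat.lt_or_ge p 19 with h19 | h19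
    · have hmem := mem_words 3 ((cs.drop a).take 3) (by simp) (hgood a 3)
      have hchk := List.all_eq_true.1 small_check _ hmem
      have h0 := chkS_spec 25 _ hchk (s - B a) (by omega) p hp (by omega)
      rw [key 3 (by omega) (by omega) _ p le_rfl le_rfl] at h0
      simp at h0
    · have hmem := mem_words 4 ((cs.drop a).take 4) (by simp) (hgood a 4)
      have hchk := List.all_eq_true.1 mid_check _ hmem
      simp only [chkW, Bool.and_eq_true] at hchk
      rcases Nat.lt_or_ge (s - B a) 13 with h13 | h13
      · have h0 := chkP_spec _ _ _ _ hchk.1 (p-19) (by omega)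
        rw [List.drop_drop, show 31 + (p-19) = 12 + p by omega,
          key 4 (by omega) (by omega) 12 _ (by omega) (by omega)] at h0
        simp at h0
      · have h0 := chkP_spec _ _ _ _ hchk.2 (p-19) (by omega)
        rw [List.drop_drop, show 43 + (p-19) = 24 + p by omega,
          key 4 (by omega) (by omega) 24 _ (by omega) (by omega)] at h0
        simp at h0
  · have hfirst : ∀ j < n, f (B j) = (fun j => ((cs.map Prod.fst).getD j 0).val) j := by
      intro j hj
      have h1 := hfb j hj 0 (by have := hb_len cs[j]; omega)
      rw [hb_first] at h1
      simp only [add_zero] at h1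
      rw [h1]; simp [List.getD_eq_getElem?_getD, hn ▸ hj]
    have hlast : ∀ j < n, f (B (j+1) - 1) = (fun j => ((cs.map Prod.fst).getD j 0).val) j := by
      intro j hj
      have h2 := hb_len cs[j]
      have h1 := hfb j hj ((hb cs[j]).length - 1) (by omega)
      rw [hb_last] at h1
      rw [hBs j hj, Nat.add_sub_assoc (by omega), h1]
      simp [List.getD_eq_getElem?_getD, hn ▸ hj]
    have hmark : ∀ i j, j < n → i + 13 ≤ B n → (∀ k < 13, f (i+k) = f (B j + k)) →
        ∃ j' < n, i = B j' := by
      intro i j hj hi hk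
      obtain ⟨a, han, ha1, ha2⟩ := hloc i (by omega)
      rcases Nat.eq_or_lt_of_le ha1 with h | hlt
      · exact ⟨a, han, h.symm⟩
      exfalso
      obtain ⟨hL, hLf⟩ := window cs a 2
      have hmem := mem_words 2 ((cs.drop a).take 2) (by simp) (hgood a 2)
      have hchk := List.all_eq_true.1 mark_check _ hmem
      have hcons : (cs.drop a).take 2 = cs[a] :: (cs.drop (a+1)).take 1 := by
        rw [List.drop_eq_getElem_cons (hn ▸ han)]; rfl
      rw [hcons] at hchk hL hLf
      simp only [chkM'] at hchk
      set L := F (cs[a] :: (cs.drop (a+1)).take 1) with hLdef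
      change B a + L.length = B (a+2) at hL
      have hLf' : ∀ x < L.length, f (B a + x) = L.getD x 0 := hLf
      have hlen : i + 13 ≤ B a + L.length := by
        rw [hL]
        rcases Nat.lt_or_ge n (a+2) with h | h
        · rw [hBge _ h.le]; omega
        · have h1 := (hB (a+1) (by omega)).1
          change _ ≤ B (a+2) at h1
          omega
      have hBa := hBs a han
      have h0 := chkM_spec _ _ hchk (i - B a - 1) (by omega) cs[j]
      have hbj := hb_len cs[j]
      rw [List.drop_tail, agree_of 13] at h0
      · simp at h0
      · rw [List.length_drop]; omega
      · omega
      · intro k hk'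
        rw [← hfb j hj k (by omega), ← hk k hk', List.getD_eq_getElem?_getD, List.getElem?_drop,
          ← List.getD_eq_getElem?_getD, ← hLf' _ (by omega)]
        congr 1; omega
    obtain ⟨a, d, hd, had, hper⟩ := core n B f _ hB0 hB hfirst hlast hmark s p h37 (by omega) hsq
    set W := cs.map Prod.fst with hW
    have hWl : W.length = n := by simp [hW, hn]
    apply hw ((W.drop a).take d)
    · intro h
      have := congrArg List.length h
      simp only [List.length_take, List.length_drop, List.length_nil] at this
      omega
    · have e : (W.drop a).take d = (W.drop (a+d)).take d := by
        apply List.ext_getElem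
        · simp only [List.length_take, List.length_drop]; omega
        · intro i h1 h2
          simp only [List.length_take, List.length_drop] at h1 h2
          simp only [List.getElem_take, List.getElem_drop]
          have := hper (a+i) (by omega) (by omega)
          rw [List.getD_eq_getElem _ _ (by omega), List.getD_eq_getElem _ _ (by omega)] at this
          have := Fin.ext this
          rw [this]; congr 1; omega
      have e2 : (W.drop a).take d ++ (W.drop a).take d = (W.drop a).take (d+d) := by
        rw [List.take_add, List.drop_drop, ← e]
      rw [e2]
      exact (List.take_prefix _ _).isInfix.trans (List.drop_suffix _ _).isInfix

theorem himg_hb (c : Fin 3) (u : List (Fin 3)) (h : u ∈ himg c) :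
    ∃ b, u.map Fin.val = hb (c, b) := by
  fin_cases c <;> simp only [himg] at h <;> rcases h with h | h <;>
    first
    | exact ⟨false, by rw [h]; rfl⟩
    | exact ⟨true, by rw [h]; rfl⟩

theorem exists_cs (w : List (Fin 3)) (vs : List (List (Fin 3)))
    (h : List.Forall₂ (fun c u => u ∈ himg c) w vs) :
    ∃ cs : List (Fin 3 × Bool), cs.map Prod.fst = w ∧ vs.flatten.map Fin.val = F cs := by
  induction h with
  | nil => exact ⟨[], rfl, rfl⟩
  | @cons c u _ _ h1 _ ih =>
    obtain ⟨cs, h2, h3⟩ := ih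
    obtain ⟨b, hb'⟩ := himg_hb _ _ h1
    exact ⟨(c, b) :: cs, by simp [h2], by
      rw [List.flatten_cons, List.map_append, h3, hb']; simp [F]⟩

end ImgSq

/-- The substitution `h` is square-free: every image of a square-free word is
square-free. -/
theorem image_squarefree (w v : List (Fin 3)) (hw : SqFree w) (hv : IsImage w v) :
    SqFree v := by
  obtain ⟨vs, hvs, rfl⟩ := hv
  obtain ⟨cs, hcs, hF⟩ := ImgSq.exists_cs w vs hvs
  rintro u hu ⟨x, y, hxy⟩
  have hlen : 0 < u.length := List.length_pos_iff.2 hu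
  have e : ImgSq.F cs = x.map Fin.val ++ (u.map Fin.val ++ (u.map Fin.val ++ y.map Fin.val)) := by
    rw [← hF, ← hxy]; simp
  refine ImgSq.main cs (hcs ▸ hw) x.length u.length hlen ?_ ?_
  · rw [e]; simp; omega
  · intro i h1 h2
    rw [e]
    obtain ⟨k, rfl⟩ := Nat.exists_eq_add_of_le h1
    rw [List.getD_append_right _ _ _ _ (by simp),
      List.getD_append_right _ _ _ (x.length + k + u.length) (by simp; omega)]
    rw [List.getD_append _ _ _ _ (by simp; omega),
      List.getD_append_right _ _ _ _ (by simp; omega),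
      List.getD_append _ _ _ _ (by simp; omega)]
    congr 1; simp; omega
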